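/- The 21×21 real symmetric matrix A has signature (6, 1, 14): among its 21 real eigenvalues counted with multiplicity, exactly 6 are positive, exactly 1 is negative, and exactly 14 are zero. Equivalently, there is an invertible real matrix P such that Pᵀ A P is the diagonal matrix with six entries 1, one entry −1, and fourteen entries 0. -/

import Mathlib

/-!
`A` is a circulant matrix whose entries only depend on the orbit of `i - j` under the subgroup
`{±1, ±4, ±5}` of `(ℤ/21)ˣ`. Its spectrum is `α = -(336 + 126√21)/50 < 0` (the row sum, simple),
`β = (231 + 21√21)/50 > 0` (multiplicity six) and `0` (multiplicity fourteen).

All of this follows from one exact identity, `A² = β A + γ J` with `J` the all-ones matrix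
(`A_mul_A`), together with `A J = α J` (`A_mul_J`). They give the cubic relation
`A³ = (α + β) A² - α β A`, so that every eigenvalue lies in `{0, α, β}`; the traces of `A` and `A²`
are `α + 6 β` and `α² + 6 β²`, and these two linear equations determine the multiplicities.
The identities are checked by computation for the matrix `50 A`, whose entries lie in `ℤ[√21]`
(`entry_convolution`, a cyclic convolution over `ℤ/21`). The congruence normal form comes from the
spectral theorem: rescale an orthonormal eigenbasis by `1/√|λ|` and permute it so that
the signs appear in the right order (`exists_congr_diagonal`).
-/

open Matrix Finset

noncomputable section

def u : ℝ := (27 + 7 * Real.sqrt 21) / 50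
def v : ℝ := (21 + 11 * Real.sqrt 21) / 50
def w : ℝ := (49 + 9 * Real.sqrt 21) / 50

/-- The 21×21 Gram matrix `A` of the polytope `P₂₁ ⊂ H⁶`. -/
def A : Matrix (Fin 21) (Fin 21) ℝ := fun i j =>
  let d : ZMod 21 := (i.val : ZMod 21) - (j.val : ZMod 21)
  if d = 0 then 1
  else if d ∈ ({1, -1, 4, -4, 5, -5} : Finset (ZMod 21)) then 0
  else if d ∈ ({3, -3, 6, -6, 9, -9} : Finset (ZMod 21)) then -u
  else if d ∈ ({2, -2, 8, -8, 10, -10} : Finset (ZMod 21)) then -v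
  else -w  -- this case occurs exactly when `d = ±7 (mod 21)`

/-- The diagonal of the normal form: six `1`s, one `−1`, fourteen `0`s. -/
def sigDiag : Fin 21 → ℝ := fun i =>
  if i.val < 6 then 1 else if i.val = 6 then -1 else 0

end

/-- The entry of `50 A` in position `(i, j)` with `i - j = d`, as an element of `ℤ[√21]`. -/
def entry (d : ZMod 21) : ℤ√21 :=
  if d = 0 then ⟨50, 0⟩
  else if d ∈ ({1, -1, 4, -4, 5, -5} : Finset (ZMod 21)) then 0
  else if d ∈ ({3, -3, 6, -6, 9, -9} : Finset (ZMod 21)) then ⟨-27, -7⟩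
  else if d ∈ ({2, -2, 8, -8, 10, -10} : Finset (ZMod 21)) then ⟨-21, -11⟩
  else ⟨-49, -9⟩

/-- The values of `entry` as a lookup table, which evaluates much faster than the membership
tests in `entry`. -/
def entryTable (d : ZMod 21) : ℤ√21 :=
  (![⟨50, 0⟩, 0, ⟨-21, -11⟩, ⟨-27, -7⟩, 0, 0, ⟨-27, -7⟩,
    ⟨-49, -9⟩, ⟨-21, -11⟩, ⟨-27, -7⟩, ⟨-21, -11⟩, ⟨-21, -11⟩, ⟨-27, -7⟩, ⟨-21, -11⟩,
    ⟨-49, -9⟩, ⟨-27, -7⟩, 0, 0, ⟨-27, -7⟩, ⟨-21, -11⟩, 0] : Fin 21 → ℤ√21) d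

theorem entry_eq_entryTable (d : ZMod 21) : entry d = entryTable d := by
  revert d
  decide +kernel

theorem entry_convolution (d : ZMod 21) :
    ∑ m, entry m * entry (d - m) = ⟨231, 21⟩ * entry d + ⟨27594, 5754⟩ := by
  simp only [entry_eq_entryTable]
  revert d
  decide +kernel

theorem sum_entry : ∑ m, entry m = ⟨-336, -126⟩ := by
  decide +kernel

/-- The matrix `50 A`, with entries in `ℤ[√21]`. -/
def intA : Matrix (Fin 21) (Fin 21) (ℤ√21) := fun i j =>
  entry ((i.val : ZMod 21) - (j.val : ZMod 21))

/-- Summation over a column index of a circulant matrix as a sum over `ℤ/21`. -/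
theorem sum_sub_eq (f : ZMod 21 → ℤ√21) (i : Fin 21) :
    ∑ k : Fin 21, f ((i.val : ZMod 21) - (k.val : ZMod 21)) = ∑ m, f m := by
  -- `ZMod 21` unfolds to `Fin 21`, so casting the value of `k` is the identity.
  have hcast (k : Fin 21) : (k.val : ZMod 21) = k := ZMod.natCast_zmod_val (n := 21) k
  simp only [hcast]
  exact Fintype.sum_equiv (Equiv.subLeft (i : ZMod 21)) _ _ fun _ => rfl

theorem intA_mul_intA (i j : Fin 21) :
    ∑ k, intA i k * intA k j = ⟨231, 21⟩ * intA i j + ⟨27594, 5754⟩ := by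
  have h := sum_sub_eq
    (fun m => entry m * entry ((i.val : ZMod 21) - (j.val : ZMod 21) - m)) i
  rw [entry_convolution] at h
  rw [intA, ← h]
  refine Finset.sum_congr rfl fun k _ => ?_
  simp only [intA]
  congr 2
  ring

theorem sum_intA (i : Fin 21) : ∑ k, intA i k = ⟨-336, -126⟩ :=
  (sum_sub_eq entry i).trans sum_entry

/-- The embedding `ℤ[√21] → ℝ`. -/
noncomputable def toReal : ℤ√21 →+* ℝ :=
  Zsqrtd.lift ⟨√21, by norm_num⟩

theorem toReal_mk (x y : ℤ) : toReal ⟨x, y⟩ = x + y * √21 := rfl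

theorem A_apply_eq (i j : Fin 21) : A i j = toReal (intA i j) / 50 := by
  simp only [A, intA, entry, u, v, w]
  split_ifs <;> simp only [toReal_mk, map_zero] <;> push_cast <;> ring

/-- The row sum of `A`, which is its negative eigenvalue. -/
noncomputable def negEig : ℝ := -(336 + 126 * √21) / 50

/-- The positive eigenvalue of `A`. -/
noncomputable def posEig : ℝ := (231 + 21 * √21) / 50

theorem negEig_neg : negEig < 0 := by
  have := Real.sqrt_nonneg 21
  unfold negEig
  linarith

theorem posEig_pos : 0 < posEig := by
  have := Real.sqrt_nonneg 21
  unfold posEig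
  linarith

/-- The coefficient `(27594 + 5754 √21) / 2500` of `J` in `A²` equals `α (α - β) / 21`, as it must
because the projection onto the `α`-eigenspace is `J / 21`. -/
theorem A_mul_A :
    A * A = posEig • A + (negEig * (negEig - posEig) / 21) • Matrix.of fun _ _ => (1 : ℝ) := by
  ext i j
  have h := congrArg toReal (intA_mul_intA i j)
  simp only [map_sum, map_mul, map_add, toReal_mk] at h
  have h2 : √21 * √21 = (21 : ℝ) := by norm_num
  simp only [Matrix.mul_apply, Matrix.add_apply, Matrix.smul_apply, Matrix.of_apply, smul_eq_mul,
    A_apply_eq, div_mul_div_comm, ← Finset.sum_div, h, negEig, posEig]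
  push_cast
  linear_combination (-(126 * 147 : ℝ) / 2500 / 21) * h2

theorem A_mul_J :
    A * (Matrix.of fun _ _ => (1 : ℝ)) = negEig • Matrix.of fun (_ _ : Fin 21) => (1 : ℝ) := by
  ext i j
  have h := congrArg toReal (sum_intA i)
  simp only [map_sum, toReal_mk] at h
  simp only [Matrix.mul_apply, Matrix.smul_apply, Matrix.of_apply, smul_eq_mul, A_apply_eq,
    mul_one, ← Finset.sum_div, h, negEig]
  push_cast
  ring

theorem A_cubic : A * A * A = (negEig + posEig) • (A * A) - (negEig * posEig) • A := by
  have h : A * (A * A) = A * (posEig • A +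
      (negEig * (negEig - posEig) / 21) • Matrix.of fun _ _ => (1 : ℝ)) := by rw [← A_mul_A]
  rw [Matrix.mul_add, Matrix.mul_smul, Matrix.mul_smul, A_mul_J] at h
  rw [Matrix.mul_assoc, h, A_mul_A]
  module

theorem A_diag (i : Fin 21) : A i i = 1 := by simp [A]

theorem trace_A : A.trace = negEig + 6 * posEig := by
  simp only [Matrix.trace, Matrix.diag, A_diag, negEig, posEig]
  simp
  ring

theorem trace_A_mul_A : (A * A).trace = negEig ^ 2 + 6 * posEig ^ 2 := by
  have h := trace_A
  have h21 : A.trace = 21 := by simp [Matrix.trace, A_diag]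
  rw [A_mul_A, Matrix.trace_add, Matrix.trace_smul, Matrix.trace_smul]
  have hJ : (Matrix.of fun (_ _ : Fin 21) => (1 : ℝ)).trace = 21 := by simp [Matrix.trace]
  rw [hJ, h]
  simp only [smul_eq_mul]
  ring

section Hermitian

variable {n : Type*} [Fintype n] [DecidableEq n] {M : Matrix n n ℝ}

theorem eigenvectorUnitary_transpose_mul_mul (hM : M.IsHermitian) :
    (hM.eigenvectorUnitary : Matrix n n ℝ)ᵀ * M * (hM.eigenvectorUnitary : Matrix n n ℝ) =
      diagonal hM.eigenvalues := by
  have h := hM.conjStarAlgAut_star_eigenvectorUnitary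
  simpa [Unitary.conjStarAlgAut_apply, star_eq_conjTranspose, Function.comp_def] using h

theorem trace_mul_self_eq_sum_eigenvalues_sq (hM : M.IsHermitian) :
    (M * M).trace = ∑ i, hM.eigenvalues i ^ 2 := by
  conv_lhs => rw [hM.spectral_theorem, ← map_mul, Unitary.conjStarAlgAut_apply,
    Matrix.trace_mul_cycle, Unitary.coe_star_mul_self, one_mul, diagonal_mul_diagonal]
  simp [Matrix.trace, sq]

theorem eigenvalues_cubic (hM : M.IsHermitian) {s t : ℝ}
    (h : M * M * M = s • (M * M) - t • M) (i : n) :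
    hM.eigenvalues i ^ 3 = s * hM.eigenvalues i ^ 2 - t * hM.eigenvalues i := by
  have hv := hM.mulVec_eigenvectorBasis i
  have hne : (hM.eigenvectorBasis i).ofLp ≠ 0 := by
    have := hM.eigenvectorBasis.orthonormal.ne_zero i
    simpa using this
  obtain ⟨j, hj⟩ := Function.ne_iff.mp hne
  have h3 := congrArg (fun N => (N *ᵥ (hM.eigenvectorBasis i).ofLp) j) h
  simp only [Matrix.sub_mulVec, Matrix.smul_mulVec, ← Matrix.mulVec_mulVec, hv,
    Matrix.mulVec_smul, Pi.sub_apply, Pi.smul_apply, smul_eq_mul] at h3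
  refine mul_right_cancel₀ hj ?_
  linear_combination h3

/-- Sylvester normal form: a real symmetric matrix is congruent to any diagonal matrix with
entries in `{1, -1, 0}` having the right number of entries of each sign. -/
theorem exists_congr_diagonal (hM : M.IsHermitian) (D : n → SignType)
    (hD : ∀ c, Fintype.card {i // D i = c} =
      Fintype.card {i // SignType.sign (hM.eigenvalues i) = c}) :
    ∃ P : Matrix n n ℝ, IsUnit P ∧ Pᵀ * M * P = diagonal fun i => (D i : ℝ) := by
  obtain ⟨σ, hσ⟩ : ∃ σ : n ≃ n, ∀ i, SignType.sign (hM.eigenvalues (σ i)) = D i :=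
    ⟨_, Equiv.ofFiberEquiv_map (g := fun i => SignType.sign (hM.eigenvalues i))
      fun c => Fintype.equivOfCardEq (hD c)⟩
  -- At a zero eigenvalue the scaling factor is irrelevant, as long as it is nonzero.
  let r : n → ℝ := fun i => if hM.eigenvalues i = 0 then 1 else (√|hM.eigenvalues i|)⁻¹
  have hr0 (i : n) : r i ≠ 0 := by
    simp only [r]
    split_ifs with h
    · exact one_ne_zero
    · exact inv_ne_zero (Real.sqrt_ne_zero'.mpr (abs_pos.mpr h))
  have hr (i : n) : r i * hM.eigenvalues i * r i = SignType.sign (hM.eigenvalues i) := by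
    simp only [r]
    split_ifs with h
    · simp [h]
    · have hp := abs_pos.mpr h
      have hs : √|hM.eigenvalues i| * √|hM.eigenvalues i| = |hM.eigenvalues i| :=
        Real.mul_self_sqrt hp.le
      rw [mul_right_comm, ← mul_inv, hs]
      nth_rewrite 2 [← sign_mul_abs (hM.eigenvalues i)]
      field_simp
  let Q : Matrix n n ℝ := (hM.eigenvectorUnitary : Matrix n n ℝ) * diagonal r
  have hQ : Qᵀ * M * Q = diagonal fun i => (SignType.sign (hM.eigenvalues i) : ℝ) := by
    have : Qᵀ * M * Q = diagonal r * ((hM.eigenvectorUnitary : Matrix n n ℝ)ᵀ * M *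
        (hM.eigenvectorUnitary : Matrix n n ℝ)) * diagonal r := by
      simp only [Q, Matrix.transpose_mul, diagonal_transpose, Matrix.mul_assoc]
    rw [this, eigenvectorUnitary_transpose_mul_mul, diagonal_mul_diagonal, diagonal_mul_diagonal]
    simp only [hr]
  have hQu : IsUnit Q := by
    refine IsUnit.mul ⟨Unitary.toUnits hM.eigenvectorUnitary, rfl⟩ ?_
    rw [Matrix.isUnit_diagonal, Pi.isUnit_iff]
    exact fun i => (hr0 i).isUnit
  refine ⟨Q.submatrix id σ, (Matrix.isUnit_submatrix_equiv (Equiv.refl n) σ).mpr hQu, ?_⟩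
  have : (Q.submatrix id σ)ᵀ * M * Q.submatrix id σ = (Qᵀ * M * Q).submatrix σ σ := by
    ext i j
    simp [Matrix.mul_apply]
  rw [this, hQ, submatrix_diagonal_equiv]
  congr 1
  funext i
  simp [hσ]

end Hermitian

/-- The symmetric matrix `A` has signature `(6, 1, 14)`: exactly 6 positive eigenvalues,
exactly 1 negative eigenvalue, and exactly 14 zero eigenvalues, and there is an invertible
real matrix `P` with `Pᵀ A P = diag(1,1,1,1,1,1,−1,0,…,0)`. -/
theorem signature_A (hA : A.IsHermitian) :
    ({i | 0 < hA.eigenvalues i} : Finset (Fin 21)).card = 6 ∧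
    ({i | hA.eigenvalues i < 0} : Finset (Fin 21)).card = 1 ∧
    ({i | hA.eigenvalues i = 0} : Finset (Fin 21)).card = 14 ∧
    ∃ P : Matrix (Fin 21) (Fin 21) ℝ, IsUnit P ∧ Pᵀ * A * P = Matrix.diagonal sigDiag := by
  have hn := negEig_neg
  have hp := posEig_pos
  have hroot (i : Fin 21) : hA.eigenvalues i = 0 ∨ hA.eigenvalues i = negEig ∨
      hA.eigenvalues i = posEig := by
    have h := eigenvalues_cubic hA A_cubic i
    have : hA.eigenvalues i *
        ((hA.eigenvalues i - negEig) * (hA.eigenvalues i - posEig)) = 0 := by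
      linear_combination h
    simpa [sub_eq_zero] using this
  -- Power sums of the eigenvalues, split according to the sign of the eigenvalue.
  have hsum (k : ℕ) (hk : k ≠ 0) : ∑ i, hA.eigenvalues i ^ k =
      ({i | hA.eigenvalues i < 0} : Finset (Fin 21)).card * negEig ^ k +
      ({i | 0 < hA.eigenvalues i} : Finset (Fin 21)).card * posEig ^ k := by
    rw [← nsmul_eq_mul, ← nsmul_eq_mul, ← Finset.sum_const, ← Finset.sum_const,
      Finset.sum_filter, Finset.sum_filter, ← Finset.sum_add_distrib]
    refine Finset.sum_congr rfl fun i _ => ?_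
    rcases hroot i with h | h | h <;> rw [h]
    · simp [hk]
    · simp [hn, hn.le]
    · simp [hp, hp.le]
  have h1 := hsum 1 one_ne_zero
  have h2 := hsum 2 two_ne_zero
  rw [← trace_mul_self_eq_sum_eigenvalues_sq, trace_A_mul_A] at h2
  have ht : A.trace = ∑ i, hA.eigenvalues i ^ 1 := by
    simpa using hA.trace_eq_sum_eigenvalues
  rw [← ht, trace_A, pow_one, pow_one] at h1
  set N := ({i | hA.eigenvalues i < 0} : Finset (Fin 21)).card with hN
  set K := ({i | 0 < hA.eigenvalues i} : Finset (Fin 21)).card with hK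
  have hN1 : N = 1 := by
    have h : negEig * (negEig - posEig) * ((N : ℝ) - 1) = 0 := by
      linear_combination posEig * h1 - h2
    have hne : negEig * (negEig - posEig) ≠ 0 := mul_ne_zero hn.ne (by linarith)
    have := (mul_eq_zero.mp h).resolve_left hne
    exact_mod_cast sub_eq_zero.mp this
  have hK6 : K = 6 := by
    have h : posEig * ((K : ℝ) - 6) = 0 := by
      rw [hN1] at h1
      push_cast at h1
      linear_combination -h1
    have := (mul_eq_zero.mp h).resolve_left hp.ne'
    exact_mod_cast sub_eq_zero.mp this
  have hZ : ({i | hA.eigenvalues i = 0} : Finset (Fin 21)).card = 14 := by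
    have h : ({i | hA.eigenvalues i = 0} : Finset (Fin 21)).card + N + K = 21 := by
      rw [hN, hK, Finset.card_filter, Finset.card_filter, Finset.card_filter,
        ← Finset.sum_add_distrib, ← Finset.sum_add_distrib]
      have : ∀ i ∈ (Finset.univ : Finset (Fin 21)),
          (if hA.eigenvalues i = 0 then 1 else 0) + (if hA.eigenvalues i < 0 then 1 else 0) +
            (if 0 < hA.eigenvalues i then 1 else 0) = 1 := by
        intro i _
        rcases lt_trichotomy (hA.eigenvalues i) 0 with h | h | h
        · simp [h, h.ne, h.le]
        · simp [h]
        · simp [h, h.ne', h.le]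
      rw [Finset.sum_congr rfl this]
      simp
    omega
  refine ⟨hK6, hN1, hZ, ?_⟩
  let D : Fin 21 → SignType := fun i => if i.val < 6 then 1 else if i.val = 6 then -1 else 0
  have hD : sigDiag = fun i => (D i : ℝ) := by
    funext i
    simp only [sigDiag, D]
    split_ifs <;> simp
  rw [hD]
  refine exists_congr_diagonal hA D fun c => ?_
  rw [Fintype.card_subtype, Fintype.card_subtype]
  cases c
  · simp only [SignType.zero_eq_zero, sign_eq_zero_iff]
    rw [hZ]
    decide
  · simp only [SignType.neg_eq_neg_one, sign_eq_neg_one_iff]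
    rw [← hN, hN1]
    decide
  · simp only [SignType.pos_eq_one, sign_eq_one_iff]
    rw [← hK, hK6]
    decide
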